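/- There exists a constant C > 0 such that for all z ∈ ℂ with Re(z) ≥ 0 and |z| ≥ 1, and all t, X with 0 < t < X < A, one has |G(t, X, z)| ≤ C·e^{Re(z)·(X − t)} / ( (1 + |zX|^{1/2})·(1 + |zt|^{1/2}) ). -/

import Mathlib

/-- The modified Bessel function `I_ν(w) = Σ_{k≥0} (w/2)^{ν+2k} / (Γ(k+ν+1)·k!)`,
with principal-branch complex powers. -/
noncomputable def besselI (ν w : ℂ) : ℂ :=
  ∑' k : ℕ, (w / 2) ^ (ν + 2 * (k : ℂ)) / (Complex.Gamma ((k : ℂ) + ν + 1) * (Nat.factorial k : ℂ))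

/-- The modified Bessel function `K_ν(w) = (π/2)(I_{−ν}(w) − I_ν(w))/sin(νπ)` for `ν ∉ ℤ`. -/
noncomputable def besselK (ν w : ℂ) : ℂ :=
  (Real.pi : ℂ) / 2 * (besselI (-ν) w - besselI ν w) / Complex.sin (ν * (Real.pi : ℂ))

/-- The Green kernel `G(t,X,z) = √(tX)·(I_ν(zt)K_ν(zX) − I_ν(zX)K_ν(zt))`. -/
noncomputable def greenG (ν : ℂ) (t X : ℝ) (z : ℂ) : ℂ :=
  (Real.sqrt (t * X) : ℂ) *
    (besselI ν (z * t) * besselK ν (z * X) - besselI ν (z * X) * besselK ν (z * t))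

/-!
As functions of `X`, the kernel `u(X) = G(t, X, z)` and a companion `v(X)` built from the Bessel
functions of order `ν - 1` solve
`u' = (1/2 - ν)/X · u + z v`, `v' = (ν - 1/2)/X · v + z u`, with `u(t) = 0` and, by the Wronskian
of `I_ν` and `K_ν`, `v(t) = -1/z`. On the line `Re ν = 1/2` the diagonal coefficients are purely
imaginary, so they do not contribute to the growth of `|u|² + |v|²`, and Grönwall's inequality gives
`|G(t, X, z)| ≤ e^{|Re z| (X - t)} / |z|`. The case `Re ν = -1/2` follows since `G` is even in `ν`.
Finally, for `|z| ≥ 1` and `x ≤ A` one has `1 + |zx|^{1/2} ≤ (1 + A^{1/2}) |z|^{1/2}`, which turns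
`1 / |z|` into the product of weights.
-/

open Complex

open scoped Nat Real

/-- The regularized confluent hypergeometric limit function `₀F₁(; b; s) / Γ(b)`, the entire part of
the Bessel functions: `I_ν(w) = (w/2)^ν · zeroFOne (ν + 1) (w²/4)`. -/
noncomputable def zeroFOne (b s : ℂ) : ℂ := regularizedHGFun 0 {b} s

theorem hasFPowerSeriesOnBall_zeroFOne (b : ℂ) :
    HasFPowerSeriesOnBall (zeroFOne b) (regularizedHGFunSeries 0 {b}) 0 ⊤ := by
  have hradius : (regularizedHGFunSeries 0 {b}).radius = ⊤ :=
    radius_regularizedHGFunSeries_eq_top (by simp)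
  exact hradius ▸ (regularizedHGFunSeries 0 {b}).hasFPowerSeriesOnBall (by simp [hradius])

theorem hasSum_zeroFOne (b s : ℂ) :
    HasSum (fun k : ℕ ↦ s ^ k / (k ! * Gamma (b + k))) (zeroFOne b s) := by
  have h := (hasFPowerSeriesOnBall_zeroFOne b).hasSum (y := s) (by simp)
  simpa [regularizedHGFunCoeff, div_eq_mul_inv] using h

theorem zeroFOne_zero (b : ℂ) : zeroFOne b 0 = (Gamma b)⁻¹ := by
  rw [← (hasSum_zeroFOne b 0).tsum_eq, tsum_eq_single 0 (fun k hk ↦ by simp [hk])]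
  simp

theorem succ_mul_div_factorial_succ_mul_Gamma (b x : ℂ) (k : ℕ) :
    (k + 1) * (x / ((k + 1)! * Gamma (b + (k + 1)))) = x / (k ! * Gamma (b + 1 + k)) := by
  have hk : (k + 1 : ℂ) ≠ 0 := mod_cast k.succ_ne_zero
  rw [Nat.factorial_succ, add_assoc b 1, add_comm 1 (k : ℂ)]
  push_cast
  field_simp

theorem hasDerivAt_zeroFOne (b s : ℂ) : HasDerivAt (zeroFOne b) (zeroFOne (b + 1) s) s := by
  have hp := hasFPowerSeriesOnBall_zeroFOne b
  have hdiff : DifferentiableAt ℂ (zeroFOne b) s :=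
    (hp.analyticAt_of_mem (by simp)).differentiableAt
  have hsum : HasSum (fun k : ℕ ↦ s ^ k / (k ! * Gamma (b + 1 + k))) (deriv (zeroFOne b) s) := by
    simp only [← succ_mul_div_factorial_succ_mul_Gamma]
    simpa [regularizedHGFunCoeff, div_eq_mul_inv, mul_left_comm] using
      (hp.fderiv.hasSum (y := s) (by simp)).mapL (ContinuousLinearMap.apply ℂ ℂ (1 : ℂ))
  exact (hasSum_zeroFOne (b + 1) s).unique hsum ▸ hdiff.hasDerivAt

theorem hasSum_mul_zeroFOne_add_one (b s : ℂ) :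
    HasSum (fun k : ℕ ↦ k * (s ^ k / (k ! * Gamma (b + k)))) (s * zeroFOne (b + 1) s) := by
  rw [← hasSum_nat_add_iff' 1]
  simpa [← succ_mul_div_factorial_succ_mul_Gamma, pow_succ', mul_div_assoc, mul_left_comm] using
    (hasSum_zeroFOne (b + 1) s).mul_left s

theorem zeroFOne_eq_mul_add_mul (b s : ℂ) :
    zeroFOne b s = b * zeroFOne (b + 1) s + s * zeroFOne (b + 2) s := by
  have hterm (k : ℕ) : s ^ k / (k ! * Gamma (b + k)) =
      b * (s ^ k / (k ! * Gamma (b + 1 + k))) + k * (s ^ k / (k ! * Gamma (b + 1 + k))) := by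
    simp only [div_eq_mul_inv, mul_inv, one_div_Gamma_eq_self_mul_one_div_Gamma_add_one (b + k)]
    rw [add_right_comm]
    ring
  have hsum := ((hasSum_zeroFOne (b + 1) s).mul_left b).add (hasSum_mul_zeroFOne_add_one (b + 1) s)
  simp only [← hterm] at hsum
  rw [(hasSum_zeroFOne b s).unique hsum, add_assoc b, one_add_one_eq_two]

theorem zeroFOne_wronskian (ν s : ℂ) :
    zeroFOne ν s * zeroFOne (1 - ν) s - s * (zeroFOne (ν + 1) s * zeroFOne (2 - ν) s) =
      sin (ν * π) / π := by
  have hderiv (s : ℂ) : HasDerivAt (fun s ↦ zeroFOne ν s * zeroFOne (1 - ν) s -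
      s * (zeroFOne (ν + 1) s * zeroFOne (2 - ν) s)) 0 s := by
    have h₁ := hasDerivAt_zeroFOne (1 - ν) s
    have h₂ := hasDerivAt_zeroFOne (ν + 1) s
    have r₁ := zeroFOne_eq_mul_add_mul (1 - ν) s
    rw [show 1 - ν + 1 = 2 - ν by ring] at h₁ r₁
    rw [show 1 - ν + 2 = 2 - ν + 1 by ring] at r₁
    rw [show ν + 1 + 1 = ν + 2 by ring] at h₂
    refine (((hasDerivAt_zeroFOne ν s).mul h₁).sub ((hasDerivAt_id' s).mul
      (h₂.mul (hasDerivAt_zeroFOne (2 - ν) s)))).congr_deriv ?_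
    rw [r₁, zeroFOne_eq_mul_add_mul ν s]
    simp only [Pi.mul_apply]
    ring
  calc
    _ = zeroFOne ν 0 * zeroFOne (1 - ν) 0 := by
      simpa using is_const_of_deriv_eq_zero (fun s ↦ (hderiv s).differentiableAt)
        (fun s ↦ (hderiv s).deriv) s 0
    _ = sin (ν * π) / π := by
      rw [zeroFOne_zero, zeroFOne_zero, ← mul_inv, Gamma_mul_Gamma_one_sub, inv_div, mul_comm ν]

theorem besselI_eq_cpow_mul_zeroFOne (ν : ℂ) {w : ℂ} (hw : w ≠ 0) :
    besselI ν w = (w / 2) ^ ν * zeroFOne (ν + 1) (w ^ 2 / 4) := by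
  have hw' : w / 2 ≠ 0 := div_ne_zero hw two_ne_zero
  rw [besselI, ← (hasSum_zeroFOne _ _).tsum_eq, ← tsum_mul_left]
  refine tsum_congr fun k ↦ ?_
  have hpow : (w / 2) ^ (2 * (k : ℂ)) = (w ^ 2 / 4) ^ k := by
    rw [← Nat.cast_ofNat, ← Nat.cast_mul, cpow_natCast, pow_mul, div_pow]
    norm_num
  rw [cpow_add _ _ hw', hpow, mul_div_assoc, mul_comm (k ! : ℂ), add_comm (ν + 1),
    add_assoc (k : ℂ)]

theorem besselI_sub_one_eq (ν : ℂ) {w : ℂ} (hw : w ≠ 0) :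
    besselI (ν - 1) w = besselI (ν + 1) w + 2 * ν / w * besselI ν w := by
  have hw' : w / 2 ≠ 0 := div_ne_zero hw two_ne_zero
  rw [besselI_eq_cpow_mul_zeroFOne _ hw, besselI_eq_cpow_mul_zeroFOne _ hw,
    besselI_eq_cpow_mul_zeroFOne _ hw, cpow_sub _ _ hw', cpow_add _ _ hw', cpow_one,
    sub_add_cancel, zeroFOne_eq_mul_add_mul ν, show ν + 1 + 1 = ν + 2 by ring]
  field_simp
  ring

theorem mul_ofReal_mem_slitPlane {z : ℂ} (hz : z ∈ slitPlane) {x : ℝ} (hx : 0 < x) :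
    z * x ∈ slitPlane := by
  simpa [mem_slitPlane_iff, hx, hx.ne'] using hz

theorem hasDerivAt_besselI (ν : ℂ) {w : ℂ} (hw : w ∈ slitPlane) :
    HasDerivAt (besselI ν) (besselI (ν + 1) w + ν / w * besselI ν w) w := by
  have hw₀ := slitPlane_ne_zero hw
  have hw' : w / 2 ≠ 0 := div_ne_zero hw₀ two_ne_zero
  have hslit : w / 2 ∈ slitPlane := by
    simpa [div_eq_mul_inv] using mul_ofReal_mem_slitPlane hw (x := 2⁻¹) (by norm_num)
  have hpow := ((hasDerivAt_id' w).div_const 2).cpow_const (c := ν) hslit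
  have hentire : HasDerivAt (fun w ↦ zeroFOne (ν + 1) (w ^ 2 / 4))
      (zeroFOne (ν + 1 + 1) (w ^ 2 / 4) * (w / 2)) w := by
    refine (hasDerivAt_zeroFOne (ν + 1) (w ^ 2 / 4)).comp w
      (((hasDerivAt_pow 2 w).div_const 4).congr_deriv ?_)
    push_cast
    ring
  have heq : besselI ν =ᶠ[nhds w] fun w ↦ (w / 2) ^ ν * zeroFOne (ν + 1) (w ^ 2 / 4) := by
    filter_upwards [isOpen_ne.mem_nhds hw₀] with y hy using besselI_eq_cpow_mul_zeroFOne ν hy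
  refine ((hpow.mul hentire).congr_of_eventuallyEq heq).congr_deriv ?_
  rw [besselI_eq_cpow_mul_zeroFOne _ hw₀, besselI_eq_cpow_mul_zeroFOne _ hw₀,
    cpow_sub _ _ hw', cpow_add _ _ hw', cpow_one]
  field_simp
  ring

theorem hasDerivAt_besselI_sub_one (ν : ℂ) {w : ℂ} (hw : w ∈ slitPlane) :
    HasDerivAt (besselI ν) (besselI (ν - 1) w - ν / w * besselI ν w) w := by
  refine (hasDerivAt_besselI ν hw).congr_deriv ?_
  rw [besselI_sub_one_eq ν (slitPlane_ne_zero hw)]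
  ring

theorem besselI_wronskian (ν : ℂ) {w : ℂ} (hw : w ≠ 0) :
    besselI (ν - 1) w * besselI (-ν) w - besselI ν w * besselI (1 - ν) w =
      2 * sin (ν * π) / (π * w) := by
  have hw' : w / 2 ≠ 0 := div_ne_zero hw two_ne_zero
  have hpow : (w / 2) ^ ν ≠ 0 := by simp [cpow_eq_zero_iff, hw]
  calc
    _ = 2 / w * (zeroFOne ν (w ^ 2 / 4) * zeroFOne (1 - ν) (w ^ 2 / 4) -
          w ^ 2 / 4 * (zeroFOne (ν + 1) (w ^ 2 / 4) * zeroFOne (2 - ν) (w ^ 2 / 4))) := by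
      simp only [besselI_eq_cpow_mul_zeroFOne _ hw, cpow_sub _ _ hw', cpow_neg, cpow_one]
      rw [sub_add_cancel, neg_add_eq_sub, show 1 - ν + 1 = 2 - ν by ring]
      field_simp
      ring
    _ = 2 * sin (ν * π) / (π * w) := by
      rw [zeroFOne_wronskian]
      ring

theorem besselK_neg (ν w : ℂ) : besselK (-ν) w = besselK ν w := by
  rw [besselK, besselK, neg_mul, sin_neg, neg_neg]
  ring

theorem besselK_sub_one (ν w : ℂ) :
    besselK (ν - 1) w = π / 2 * (besselI (ν - 1) w - besselI (1 - ν) w) / sin (ν * π) := by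
  rw [besselK, sub_one_mul, sin_sub_pi, neg_sub]
  ring

theorem hasDerivAt_besselK_sub_one (ν : ℂ) {w : ℂ} (hw : w ∈ slitPlane) :
    HasDerivAt (besselK ν) (-besselK (ν - 1) w - ν / w * besselK ν w) w := by
  refine ((((hasDerivAt_besselI (-ν) hw).sub (hasDerivAt_besselI_sub_one ν hw)).const_mul
    (π / 2 : ℂ)).div_const (sin (ν * π))).congr_deriv ?_
  rw [besselK_sub_one, besselK, neg_add_eq_sub]
  ring

theorem hasDerivAt_besselK (ν : ℂ) {w : ℂ} (hw : w ∈ slitPlane) :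
    HasDerivAt (besselK ν) (-besselK (ν + 1) w + ν / w * besselK ν w) w := by
  have h := hasDerivAt_besselK_sub_one (-ν) hw
  rw [funext (besselK_neg ν), sub_eq_add_neg (-ν), ← neg_add, besselK_neg] at h
  exact h.congr_deriv (by ring)

theorem besselI_besselK_wronskian {ν w : ℂ} (hν : sin (ν * π) ≠ 0) (hw : w ≠ 0) :
    besselI (ν - 1) w * besselK ν w + besselI ν w * besselK (ν - 1) w = w⁻¹ := by
  have hπ : (π : ℂ) ≠ 0 := ofReal_ne_zero.mpr Real.pi_ne_zero
  calc
    _ = π / 2 / sin (ν * π) * (besselI (ν - 1) w * besselI (-ν) w -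
          besselI ν w * besselI (1 - ν) w) := by
      rw [besselK_sub_one, besselK]
      ring
    _ = w⁻¹ := by
      rw [besselI_wronskian ν hw]
      generalize sin (ν * π) = S at hν
      field_simp

open scoped InnerProductSpace in
theorem inner_add_inner_le_of_re_nonpos {α β : ℂ} (hα : α.re ≤ 0) (hβ : β.re ≤ 0) (z u v : ℂ) :
    ⟪u, α * u + z * v⟫_ℝ + ⟪v, β * v + z * u⟫_ℝ ≤ |z.re| * (‖u‖ ^ 2 + ‖v‖ ^ 2) := by
  have hdiag : ⟪u, α * u⟫_ℝ + ⟪v, β * v⟫_ℝ = α.re * ‖u‖ ^ 2 + β.re * ‖v‖ ^ 2 := by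
    simp only [Complex.inner, Complex.sq_norm, normSq_apply, mul_re, mul_im, conj_re, conj_im]
    ring
  have hcross : ⟪u, z * v⟫_ℝ + ⟪v, z * u⟫_ℝ = 2 * (z.re * ⟪u, v⟫_ℝ) := by
    simp only [Complex.inner, mul_re, mul_im, conj_re, conj_im]
    ring
  have hcauchy : z.re * ⟪u, v⟫_ℝ ≤ |z.re| * (‖u‖ * ‖v‖) := calc
    z.re * ⟪u, v⟫_ℝ ≤ |z.re| * |⟪u, v⟫_ℝ| := (le_abs_self _).trans (abs_mul _ _).le
    _ ≤ |z.re| * (‖u‖ * ‖v‖) := by gcongr; exact abs_real_inner_le_norm u v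
  rw [inner_add_right, inner_add_right]
  nlinarith [mul_nonneg (abs_nonneg z.re) (sq_nonneg (‖u‖ - ‖v‖)),
    mul_nonneg (neg_nonneg.2 hα) (sq_nonneg ‖u‖), mul_nonneg (neg_nonneg.2 hβ) (sq_nonneg ‖v‖)]

theorem norm_sq_add_norm_sq_le_exp_mul {α β u v : ℝ → ℂ} {z : ℂ} {t X : ℝ} (htX : t ≤ X)
    (hα : ∀ x ∈ Set.Icc t X, (α x).re ≤ 0) (hβ : ∀ x ∈ Set.Icc t X, (β x).re ≤ 0)
    (hu : ∀ x ∈ Set.Icc t X, HasDerivAt u (α x * u x + z * v x) x)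
    (hv : ∀ x ∈ Set.Icc t X, HasDerivAt v (β x * v x + z * u x) x) :
    ‖u X‖ ^ 2 + ‖v X‖ ^ 2 ≤ (‖u t‖ ^ 2 + ‖v t‖ ^ 2) * Real.exp (2 * |z.re| * (X - t)) := by
  have hderiv (x : ℝ) (hx : x ∈ Set.Icc t X) := (hu x hx).norm_sq.add (hv x hx).norm_sq
  have hgronwall := le_gronwallBound_of_liminf_deriv_right_le (K := 2 * |z.re|) (ε := 0)
    (fun x hx ↦ (hderiv x hx).continuousAt.continuousWithinAt)
    (fun x hx r hr ↦ (hderiv x (Set.Ico_subset_Icc_self hx)).hasDerivWithinAt.liminf_right_slope_le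
      hr) le_rfl
    (fun x hx ↦ by
      have hx' := Set.Ico_subset_Icc_self hx
      have := inner_add_inner_le_of_re_nonpos (hα x hx') (hβ x hx') z (u x) (v x)
      simp only [Pi.add_apply]
      linarith)
    X (Set.right_mem_Icc.2 htX)
  simpa only [gronwallBound_ε0, Pi.add_apply] using hgronwall

theorem norm_le_exp_mul_norm_of_eq_zero {α β u v : ℝ → ℂ} {z : ℂ} {t X : ℝ} (htX : t ≤ X)
    (hα : ∀ x ∈ Set.Icc t X, (α x).re ≤ 0) (hβ : ∀ x ∈ Set.Icc t X, (β x).re ≤ 0)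
    (hu : ∀ x ∈ Set.Icc t X, HasDerivAt u (α x * u x + z * v x) x)
    (hv : ∀ x ∈ Set.Icc t X, HasDerivAt v (β x * v x + z * u x) x) (hut : u t = 0) :
    ‖u X‖ ≤ ‖v t‖ * Real.exp (|z.re| * (X - t)) := by
  have h := norm_sq_add_norm_sq_le_exp_mul htX hα hβ hu hv
  have hexp : Real.exp (2 * |z.re| * (X - t)) = Real.exp (|z.re| * (X - t)) ^ 2 := by
    rw [sq, ← Real.exp_add]
    ring_nf
  rw [hut, norm_zero, hexp] at h
  refine le_of_sq_le_sq ?_ (by positivity)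
  nlinarith [sq_nonneg ‖v X‖]

theorem hasDerivAt_sqrt_mul_comp_mul {f : ℂ → ℂ} {f' z : ℂ} {t x : ℝ} (ht : 0 < t) (hx : 0 < x)
    (hf : HasDerivAt f f' (z * x)) :
    HasDerivAt (fun y : ℝ ↦ (√(t * y) : ℂ) * f (z * y))
      (√(t * x) * (1 / (2 * x) * f (z * x) + z * f')) x := by
  have hsqrt : HasDerivAt (fun y : ℝ ↦ (√(t * y) : ℂ)) (√(t * x) * (1 / (2 * x))) x := by
    refine (((hasDerivAt_id' x).const_mul t).sqrt (by positivity)).ofReal_comp.congr_deriv ?_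
    have hsq : √(t * x) ^ 2 = t * x := Real.sq_sqrt (by positivity)
    have hreal : t * 1 / (2 * √(t * x)) = √(t * x) * (1 / (2 * x)) := by
      field_simp
      exact hsq.symm
    rw [hreal]
    push_cast
    rfl
  have hcomp : HasDerivAt (fun y : ℝ ↦ f (z * y)) (z * f') x := by
    refine (hf.comp (x : ℂ) ((hasDerivAt_id' (x : ℂ)).const_mul z)).comp_ofReal.congr_deriv ?_
    ring
  exact (hsqrt.mul hcomp).congr_deriv (by ring)

/-- The second component of the first-order system that `X ↦ greenG ν t X z` satisfies. -/
noncomputable def greenCompanion (ν : ℂ) (t X : ℝ) (z : ℂ) : ℂ :=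
  (√(t * X) : ℂ) *
    -(besselI ν (z * t) * besselK (ν - 1) (z * X) + besselI (ν - 1) (z * X) * besselK ν (z * t))

theorem greenG_self (ν : ℂ) (t : ℝ) (z : ℂ) : greenG ν t t z = 0 := by
  rw [greenG, sub_self, mul_zero]

theorem greenG_neg (ν : ℂ) (t X : ℝ) (z : ℂ) : greenG (-ν) t X z = greenG ν t X z := by
  rw [greenG, greenG, besselK_neg, besselK_neg]
  simp only [besselK]
  ring

theorem greenCompanion_self {ν z : ℂ} {t : ℝ} (hν : sin (ν * π) ≠ 0) (hz : z ≠ 0) (ht : 0 < t) :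
    greenCompanion ν t t z = -z⁻¹ := by
  have ht' : (t : ℂ) ≠ 0 := ofReal_ne_zero.mpr ht.ne'
  rw [greenCompanion, add_comm, besselI_besselK_wronskian hν (mul_ne_zero hz ht'),
    Real.sqrt_mul_self ht.le]
  field_simp

theorem hasDerivAt_greenG {ν z : ℂ} (hz : z ∈ slitPlane) {t x : ℝ} (ht : 0 < t) (hx : 0 < x) :
    HasDerivAt (fun y ↦ greenG ν t y z)
      ((1 / 2 - ν) / x * greenG ν t x z + z * greenCompanion ν t x z) x := by
  have hzx := mul_ofReal_mem_slitPlane hz hx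
  have hz₀ := slitPlane_ne_zero hz
  have hx' : (x : ℂ) ≠ 0 := ofReal_ne_zero.mpr hx.ne'
  refine (hasDerivAt_sqrt_mul_comp_mul ht hx
    (((hasDerivAt_besselK_sub_one ν hzx).const_mul (besselI ν (z * t))).sub
      ((hasDerivAt_besselI_sub_one ν hzx).mul_const (besselK ν (z * t))))).congr_deriv ?_
  simp only [greenG, greenCompanion, Pi.sub_apply]
  field_simp
  ring

theorem hasDerivAt_greenCompanion {ν z : ℂ} (hz : z ∈ slitPlane) {t x : ℝ} (ht : 0 < t)
    (hx : 0 < x) :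
    HasDerivAt (fun y ↦ greenCompanion ν t y z)
      ((ν - 1 / 2) / x * greenCompanion ν t x z + z * greenG ν t x z) x := by
  have hzx := mul_ofReal_mem_slitPlane hz hx
  have hz₀ := slitPlane_ne_zero hz
  have hx' : (x : ℂ) ≠ 0 := ofReal_ne_zero.mpr hx.ne'
  refine (hasDerivAt_sqrt_mul_comp_mul ht hx
    (((hasDerivAt_besselK (ν - 1) hzx).const_mul (besselI ν (z * t))).add
      ((hasDerivAt_besselI (ν - 1) hzx).mul_const (besselK ν (z * t)))).neg).congr_deriv ?_
  simp only [greenG, greenCompanion, Pi.neg_apply, Pi.add_apply, sub_add_cancel]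
  field_simp
  ring

theorem sin_mul_pi_ne_zero_of_re_eq_half {ν : ℂ} (hν : ν.re = 1 / 2) : sin (ν * π) ≠ 0 := by
  rw [sin_ne_zero_iff]
  intro k hk
  have h := congrArg re (mul_right_cancel₀ (ofReal_ne_zero.mpr Real.pi_ne_zero) hk)
  rw [hν, intCast_re, div_eq_iff two_ne_zero] at h
  have : 1 = k * 2 := by exact_mod_cast h
  omega

theorem norm_greenG_le_of_re_eq_half {ν z : ℂ} (hν : ν.re = 1 / 2) (hz : z ∈ slitPlane) {t X : ℝ}
    (ht : 0 < t) (htX : t ≤ X) :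
    ‖greenG ν t X z‖ ≤ Real.exp (|z.re| * (X - t)) / ‖z‖ := by
  have hpos (x : ℝ) (hx : x ∈ Set.Icc t X) : 0 < x := ht.trans_le hx.1
  have h := norm_le_exp_mul_norm_of_eq_zero htX (α := fun x ↦ (1 / 2 - ν) / x)
    (β := fun x ↦ (ν - 1 / 2) / x) (by simp [div_ofReal_re, hν]) (by simp [div_ofReal_re, hν])
    (fun x hx ↦ hasDerivAt_greenG hz ht (hpos x hx))
    (fun x hx ↦ hasDerivAt_greenCompanion hz ht (hpos x hx)) (greenG_self ν t z)
  rwa [greenCompanion_self (sin_mul_pi_ne_zero_of_re_eq_half hν) (slitPlane_ne_zero hz) ht,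
    norm_neg, norm_inv, inv_mul_eq_div] at h

theorem norm_greenG_le {ν z : ℂ} (hν : |ν.re| = 1 / 2) (hz : z ∈ slitPlane) {t X : ℝ}
    (ht : 0 < t) (htX : t ≤ X) :
    ‖greenG ν t X z‖ ≤ Real.exp (|z.re| * (X - t)) / ‖z‖ := by
  rcases (abs_eq one_half_pos.le).1 hν with hre | hre
  · exact norm_greenG_le_of_re_eq_half hre hz ht htX
  · rw [← greenG_neg]
    exact norm_greenG_le_of_re_eq_half (by rw [neg_re, hre, neg_neg]) hz ht htX

theorem one_add_sqrt_norm_mul_ofReal_le {z : ℂ} (hz : 1 ≤ ‖z‖) {x A : ℝ} (hx : 0 ≤ x)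
    (hxA : x ≤ A) : 1 + √‖z * x‖ ≤ √‖z‖ * (1 + √A) := by
  rw [norm_mul, norm_real, Real.norm_of_nonneg hx, Real.sqrt_mul (norm_nonneg z), mul_one_add]
  gcongr
  exact Real.one_le_sqrt.2 hz

theorem mem_slitPlane_of_re_nonneg {z : ℂ} (hre : 0 ≤ z.re) (hz : z ≠ 0) : z ∈ slitPlane := by
  rw [mem_slitPlane_iff]
  rcases hre.lt_or_eq with hpos | hzero
  · exact Or.inl hpos
  · exact Or.inr fun him ↦ hz (Complex.ext hzero.symm him)

theorem stmt_7_general {ν z : ℂ} (hν : |ν.re| = 1 / 2) (hz : z ∈ slitPlane) (hz₁ : 1 ≤ ‖z‖)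
    {t X A : ℝ} (ht : 0 < t) (htX : t ≤ X) (hXA : X ≤ A) :
    ‖greenG ν t X z‖ ≤ (1 + √A) ^ 2 * Real.exp (|z.re| * (X - t)) /
      ((1 + √‖z * X‖) * (1 + √‖z * t‖)) := by
  have hdenom : (1 + √‖z * X‖) * (1 + √‖z * t‖) ≤ ‖z‖ * (1 + √A) ^ 2 := calc
    _ ≤ (√‖z‖ * (1 + √A)) * (√‖z‖ * (1 + √A)) := by
      gcongr
      · exact one_add_sqrt_norm_mul_ofReal_le hz₁ (ht.le.trans htX) hXA
      · exact one_add_sqrt_norm_mul_ofReal_le hz₁ ht.le (htX.trans hXA)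
    _ = ‖z‖ * (1 + √A) ^ 2 := by
      rw [mul_mul_mul_comm, Real.mul_self_sqrt (norm_nonneg z), ← sq]
  refine (norm_greenG_le hν hz ht htX).trans ?_
  rw [div_le_div_iff₀ (by positivity) (by positivity)]
  calc
    _ ≤ Real.exp (|z.re| * (X - t)) * (‖z‖ * (1 + √A) ^ 2) := by gcongr
    _ = _ := by ring

/-- Estimate on the Green kernel: for `ν = σ(1/2 − iμ)` with `μ ∈ ℝ`,
`σ = ±1`, there is a constant `C > 0` such that for all `z` with `Re z ≥ 0`, `|z| ≥ 1` and
all `0 < t < X < A`,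
`|G(t,X,z)| ≤ C e^{Re(z)(X−t)} / ((1+|zX|^{1/2})(1+|zt|^{1/2}))`. -/
theorem stmt_7 (μ σ : ℝ) (hσ : σ = 1 ∨ σ = -1)
    (ν : ℂ) (hν : ν = (σ : ℂ) * (1 / 2 - Complex.I * (μ : ℂ)))
    (A : ℝ) (hA : 0 < A) :
    ∃ C > (0 : ℝ), ∀ z : ℂ, 0 ≤ z.re → 1 ≤ ‖z‖ →
      ∀ t X : ℝ, 0 < t → t < X → X < A →
        ‖greenG ν t X z‖ ≤
          C * Real.exp (z.re * (X - t)) /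
            ((1 + Real.sqrt (‖z * (X : ℂ)‖)) *
              (1 + Real.sqrt (‖z * (t : ℂ)‖))) := by
  have hre : |ν.re| = 1 / 2 := by
    rcases hσ with rfl | rfl <;> simp [hν]
  refine ⟨(1 + √A) ^ 2, by positivity, fun z hz hz₁ t X ht htX hXA ↦ ?_⟩
  have hslit := mem_slitPlane_of_re_nonneg hz (norm_pos_iff.1 (one_pos.trans_le hz₁))
  simpa only [abs_of_nonneg hz] using stmt_7_general hre hslit hz₁ ht htX.le hXA.le
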